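/- Let v ∈ S_n with v ≠ w_0, and let i be the last ascent of v (the largest index with v(i) < v(i+1)). Then: (a) the box z_last = (n−v(i+1)+1, i) belongs to D(v); it is the lowest box of column i, column i is the rightmost nonempty column of D(v), and the canonical label of z_last is i; consequently z_{n−v(i+1)+1, i} is the ≺-greatest variable of R_v. (b) If moreover w ∈ S_n satisfies ℓ(w s_i) < ℓ(w), then no element of RedPipes(v, w_0 w) contains the box z_last. -/

import Mathlib

/-!
A box of `D(v)` is a non-inversion of `v`: positions `j < p` with `v j < v p` give the box in
column `j` and row `n - 1 - v p` (`mem_Rothe_iff`).  After the last ascent `i` the values of `v`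
decrease, so no non-inversion starts at a (0-based) position `≥ i`, and the largest value to the
right of position `i - 1` is `v i`.  This gives everything about the position of `z_last`.

The labels come from counting the positions `k ≤ j` with `v k < v p` (`canonLabel_box`).  For
`z_last`, the positions with value below `v i` are these together with all positions `> i`, so the
label is `i`.  A box in a lower row belongs to a value `v p > v i`; all positions `≥ i - 1` carry
values below `v p` and none is counted, so its label is at most `i - 2` (`label_lt_of_row_lt`).

As column `i` is the rightmost nonempty one, every box following `z_last` in reading order lies in a
strictly lower row, so in a reduced pipe dream containing `z_last` the factor `s_i` of `z_last`
commutes with all later factors.  Every step of a reduced pipe dream is effective (`foldl_eq_prod`), hence `x = w₀ w` is the product of the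
word, and `x s_i` is the product of the word with `z_last` deleted.  Its length is thus less than
that of `x`.  But left multiplication by `w₀` reverses length (`invCount_longest_mul`), so
`ℓ(w s_i) < ℓ(w)` says `ℓ(x s_i) > ℓ(x)`.
-/

open Equiv MvPolynomial

noncomputable section
open scoped Classical

variable {n : ℕ}

/-- The 0-based value of a permutation of `Fin n` on a natural number,
extended by the identity outside `{0, …, n-1}`. -/
def permVal (v : Equiv.Perm (Fin n)) (j : ℕ) : ℕ :=
  if h : j < n then (v ⟨j, h⟩ : ℕ) else j

/-- The longest element `w₀` of the symmetric group, `w₀(i) = n + 1 - i` (1-based). -/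
def longest : Equiv.Perm (Fin n) :=
  ⟨Fin.rev, Fin.rev, Fin.rev_rev, Fin.rev_rev⟩

/-- The Rothe diagram of `v`, as a set of 0-based boxes `(i, j)` where `i` counts rows
from the bottom and `j` columns from the left.  In 1-based terms this is
`{(i,j) : i < n - v(j) + 1 and j < v⁻¹(n - i + 1)}`. -/
def Rothe (v : Equiv.Perm (Fin n)) : Finset (ℕ × ℕ) :=
  (Finset.range n ×ˢ Finset.range n).filter
    (fun p => p.1 + permVal v p.2 + 1 < n ∧ p.2 < permVal v.symm (n - 1 - p.1))

/-- The rank matrix `r^w_{ij} = #{k ≤ j : w(k) ≥ n - i + 1}` (translated to 0-based `i`, `j`). -/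
def rankMat (w : Equiv.Perm (Fin n)) (i j : ℕ) : ℕ :=
  ((Finset.range n).filter (fun t => t ≤ j ∧ n ≤ permVal w t + i + 1)).card

/-- Bruhat order via rank matrices. -/
def bruhatLE (u w : Equiv.Perm (Fin n)) : Prop :=
  ∀ i j : ℕ, rankMat u i j ≤ rankMat w i j

/-- The essential set of `w`. -/
def essentialSet (w : Equiv.Perm (Fin n)) : Finset (ℕ × ℕ) :=
  (Rothe w).filter (fun p => (p.1 + 1, p.2) ∉ Rothe w ∧ (p.1, p.2 + 1) ∉ Rothe w)

/-- The number of inversions (Coxeter length) of a permutation. -/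
def invCount (u : Equiv.Perm (Fin n)) : ℕ :=
  ((Finset.univ : Finset (Fin n × Fin n)).filter
    (fun p => p.1 < p.2 ∧ u p.2 < u p.1)).card

/-- The adjacent transposition `s_l` (`l` 1-based) swapping `l` and `l+1`;
the identity if `l` is out of range. -/
def adjSwap {n : ℕ} (l : ℕ) : Equiv.Perm (Fin n) :=
  if h : 1 ≤ l ∧ l < n then Equiv.swap ⟨l - 1, by omega⟩ ⟨l, h.2⟩ else 1

/-- The canonical (1-based) label of a box of `D(v)`: the `t`-th box from the left in
(1-based) row `i` gets label `i + t - 1`. -/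
def canonLabel (v : Equiv.Perm (Fin n)) (b : ℕ × ℕ) : ℕ :=
  b.1 + ((Rothe v).filter (fun b' => b'.1 = b.1 ∧ b'.2 ≤ b.2)).card

/-- The boxes of `P` listed in reading order: rows from top (largest row index) to bottom,
left to right within each row. -/
def readingList (n : ℕ) (P : Finset (ℕ × ℕ)) : List (ℕ × ℕ) :=
  ((List.range n).reverse).flatMap
    (fun i => ((List.range n).filter (fun j => decide ((i, j) ∈ P))).map (fun j => (i, j)))

/-- One step of the Demazure product: multiply by `s_ℓ` if that increases length. -/
def demStep (v : Equiv.Perm (Fin n)) (u : Equiv.Perm (Fin n)) (b : ℕ × ℕ) :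
    Equiv.Perm (Fin n) :=
  if invCount u < invCount (u * adjSwap (canonLabel v b)) then u * adjSwap (canonLabel v b)
  else u

/-- The Demazure product of a pipe dream `P ⊆ D(v)`, scanning boxes in reading order. -/
def demazure (v : Equiv.Perm (Fin n)) (P : Finset (ℕ × ℕ)) : Equiv.Perm (Fin n) :=
  (readingList n P).foldl (demStep v) 1

/-- Pipe dreams on `D(v)` whose Demazure product is `x`. -/
def Pipes (v x : Equiv.Perm (Fin n)) : Finset (Finset (ℕ × ℕ)) :=
  (Rothe v).powerset.filter (fun P => demazure v P = x)

/-- Reduced pipe dreams on `D(v)` for `x`. -/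
def RedPipes (v x : Equiv.Perm (Fin n)) : Finset (Finset (ℕ × ℕ)) :=
  (Pipes v x).filter (fun P => P.card = invCount x)

/-- Faces of the pipe complex `Δ_{v,w}`: subsets `F ⊆ D(v)` such that `D(v) \ F`
contains a reduced pipe dream for `w₀ w`. -/
def IsFace (v w : Equiv.Perm (Fin n)) (F : Finset (ℕ × ℕ)) : Prop :=
  F ⊆ Rothe v ∧ ∃ P ∈ RedPipes v (longest * w), P ⊆ Rothe v \ F

/-- The staircase `{(i,j) : i + j ≤ n}` (1-based), translated to 0-based boxes. -/
def staircase (n : ℕ) : Finset (ℕ × ℕ) :=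
  (Finset.range n ×ˢ Finset.range n).filter (fun p => p.1 + p.2 + 2 ≤ n)

/-- The label `i + j - 1` (1-based) of a staircase box, in 0-based coordinates. -/
def fkLabel (b : ℕ × ℕ) : ℕ := b.1 + b.2 + 1

/-- One step of the Demazure product for Fomin–Kirillov pipe dreams. -/
def fkStep (u : Equiv.Perm (Fin n)) (b : ℕ × ℕ) : Equiv.Perm (Fin n) :=
  if invCount u < invCount (u * adjSwap (fkLabel b)) then u * adjSwap (fkLabel b) else u

/-- The Demazure product of an FK pipe dream on the staircase. -/
def fkDemazure (n : ℕ) (P : Finset (ℕ × ℕ)) : Equiv.Perm (Fin n) :=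
  (readingList n P).foldl fkStep 1

/-- FK pipe dreams on the staircase with Demazure product `x`. -/
def FKPipes (x : Equiv.Perm (Fin n)) : Finset (Finset (ℕ × ℕ)) :=
  (staircase n).powerset.filter (fun P => fkDemazure n P = x)

/-- Reduced FK pipe dreams for `x`. -/
def RedFKPipes (x : Equiv.Perm (Fin n)) : Finset (Finset (ℕ × ℕ)) :=
  (FKPipes x).filter (fun P => P.card = invCount x)

/-- The coordinate ring `R_v = k[z_{ij} : (i,j) ∈ D(v)]`. -/
abbrev KLRing (k : Type) [Field k] (v : Equiv.Perm (Fin n)) : Type :=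
  MvPolynomial {b : ℕ × ℕ // b ∈ Rothe v} k

/-- The specialized generic matrix `Z^{(v)}`: variables on `D(v)`, `1` in positions
`(n - v(j) + 1, j)` (1-based) and `0` elsewhere. -/
def klMatrix (k : Type) [Field k] (v : Equiv.Perm (Fin n)) :
    Matrix (Fin n) (Fin n) (KLRing k v) := fun i j =>
  if h : ((i : ℕ), (j : ℕ)) ∈ Rothe v then X ⟨((i : ℕ), (j : ℕ)), h⟩
  else if (i : ℕ) + permVal v j + 1 = n then 1 else 0

/-- The minors of size `1 + r^w_{ij}` of the southwest submatrix `Z^{(v)}_{ij}`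
(`(i,j)` a 0-based box, so rows `0..i` and columns `0..j`). -/
def minorsAt (k : Type) [Field k] (v w : Equiv.Perm (Fin n)) (i j : ℕ) :
    Set (KLRing k v) :=
  { d | ∃ ri ci : Fin (rankMat w i j + 1) → Fin n,
      StrictMono ri ∧ StrictMono ci ∧ (∀ a, (ri a : ℕ) ≤ i) ∧ (∀ a, (ci a : ℕ) ≤ j) ∧
      d = ((klMatrix k v).submatrix ri ci).det }

/-- The Kazhdan–Lusztig ideal `I_{v,w}`. -/
def KLIdeal (k : Type) [Field k] (v w : Equiv.Perm (Fin n)) : Ideal (KLRing k v) :=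
  Ideal.span { d | ∃ i j : ℕ, i < n ∧ j < n ∧ d ∈ minorsAt k v w i j }

/-- The essential minors of `I_{v,w}`: those at boxes of the essential set of `w`. -/
def essentialMinors (k : Type) [Field k] (v w : Equiv.Perm (Fin n)) : Set (KLRing k v) :=
  { d | ∃ b ∈ essentialSet w, d ∈ minorsAt k v w b.1 b.2 }

/-- Significance of a variable: `z_{ij} ≻ z_{kl}` iff `j > l` or (`j = l` and `i < k`),
encoded so that larger significance means ≺-larger variable. -/
def sigIdx (n : ℕ) (b : ℕ × ℕ) : ℕ := b.2 * n + (n - 1 - b.1)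

/-- The exponent in a monomial of the variable of significance `s`. -/
def expAt {v : Equiv.Perm (Fin n)} (m : {b : ℕ × ℕ // b ∈ Rothe v} →₀ ℕ) (s : ℕ) : ℕ :=
  ∑ b ∈ m.support, if sigIdx n (b : ℕ × ℕ) = s then m b else 0

/-- The lexicographic comparison of monomials: `m ≻ m'`. -/
def monGT {v : Equiv.Perm (Fin n)} (m m' : {b : ℕ × ℕ // b ∈ Rothe v} →₀ ℕ) : Prop :=
  ∃ s : ℕ, expAt m' s < expAt m s ∧ ∀ t : ℕ, s < t → expAt m t = expAt m' t

/-- `L` is the ≺-leading term of `f`. -/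
def IsLeadTerm (k : Type) [Field k] {v : Equiv.Perm (Fin n)} (f L : KLRing k v) : Prop :=
  ∃ m ∈ f.support, (∀ m' ∈ f.support, m' ≠ m → monGT m m') ∧
    L = MvPolynomial.monomial m (f.coeff m)

/-- The initial ideal of `I` with respect to `≺`: the ideal generated by the leading
terms of all nonzero elements of `I`. -/
def initialIdeal (k : Type) [Field k] {v : Equiv.Perm (Fin n)} (I : Ideal (KLRing k v)) :
    Ideal (KLRing k v) :=
  Ideal.span { L | ∃ f ∈ I, f ≠ 0 ∧ IsLeadTerm k f L }


/-- `i` (1-based) is the last ascent of `v`: `v(i) < v(i+1)` and no ascent occurs later. -/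
def IsLastAscent (v : Equiv.Perm (Fin n)) (i : ℕ) : Prop :=
  1 ≤ i ∧ i < n ∧ permVal v (i - 1) < permVal v i ∧
    ∀ i' : ℕ, i < i' → i' < n → ¬ permVal v (i' - 1) < permVal v i'

/-- The box `z_last = (n - v(i+1) + 1, i)` (1-based), in 0-based coordinates,
where `i` is the last ascent of `v`. -/
def zlastBox (v : Equiv.Perm (Fin n)) (i : ℕ) : ℕ × ℕ :=
  (n - permVal v i - 1, i - 1)

/-- The relabeling map `φ`: delete the box `z_last` and move every other box of
column `i` (1-based) one step to the right. -/
def phiMap (v : Equiv.Perm (Fin n)) (i : ℕ) (P : Finset (ℕ × ℕ)) : Finset (ℕ × ℕ) :=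
  P.filter (fun b => b.2 ≠ i - 1) ∪
    ((P.filter (fun b => b.2 = i - 1 ∧ b.1 ≠ n - permVal v i - 1)).image
      (fun b => (b.1, b.2 + 1)))

/-! ### Length -/

lemma invCount_longest_mul (u : Equiv.Perm (Fin n)) :
    invCount (longest * u) + invCount u =
      ((Finset.univ : Finset (Fin n × Fin n)).filter (fun p => p.1 < p.2)).card := by
  unfold invCount
  rw [← Finset.card_union_of_disjoint]
  · congr 1
    ext p
    have hne : p.1 < p.2 → u p.1 ≠ u p.2 := fun h h' => h.ne (u.injective h')
    simp only [Finset.mem_union, Finset.mem_filter, Finset.mem_univ, true_and,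
      Equiv.Perm.mul_apply, longest, Equiv.coe_fn_mk, Fin.rev_lt_rev]
    constructor
    · tauto
    · intro h
      rcases lt_or_gt_of_ne (hne h) with h' | h' <;> tauto
  · rw [Finset.disjoint_left]
    intro p
    simp only [Finset.mem_filter, Finset.mem_univ, true_and,
      Equiv.Perm.mul_apply, longest, Equiv.coe_fn_mk, Fin.rev_lt_rev]
    intro h h'
    exact lt_asymm h.2 h'.2

/-- Applying `s_l` to both positions of a pair injects the inversions of `u s_l` other than the pair
`(l, l + 1)` itself into the inversions of `u`. -/
lemma invCount_mul_adjSwap_le (u : Equiv.Perm (Fin n)) (l : ℕ) :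
    invCount (u * adjSwap l) ≤ invCount u + 1 := by
  by_cases h : 1 ≤ l ∧ l < n
  swap
  · simp [adjSwap, h]
  set a : Fin n := ⟨l - 1, by omega⟩ with ha
  set b : Fin n := ⟨l, h.2⟩ with hb
  have hs : (adjSwap l : Equiv.Perm (Fin n)) = Equiv.swap a b := by simp [adjSwap, h, ha, hb]
  rw [hs]
  unfold invCount
  rw [← Finset.card_map (Equiv.prodCongr (Equiv.swap a b) (Equiv.swap a b)).toEmbedding]
  rw [← Finset.card_singleton (b, a)]
  refine (Finset.card_le_card ?_).trans (Finset.card_union_le _ _)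
  intro q hq
  obtain ⟨⟨x, y⟩, hxyu, rfl⟩ := Finset.mem_map.1 hq
  obtain ⟨hxy, hu⟩ := (Finset.mem_filter.1 hxyu).2
  simp only [Finset.mem_union, Finset.mem_filter, Finset.mem_univ, true_and,
    Finset.mem_singleton, Equiv.coe_toEmbedding, Equiv.prodCongr_apply, Prod.map_apply,
    Prod.mk.injEq]
  simp only at hxy hu
  have hba : (a : ℕ) + 1 = b := by simp only [ha, hb]; omega
  by_cases hxa : x = a ∧ y = b
  · right
    rw [hxa.1, hxa.2]
    simp
  · left
    refine ⟨?_, hu⟩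
    -- `s_l` preserves the order of every pair of positions other than `(l, l + 1)`.
    simp only [Equiv.swap_apply_def]
    simp only [Fin.ext_iff, Fin.lt_def] at *
    split_ifs <;> omega

lemma invCount_mul_prod_le (f : ℕ × ℕ → ℕ) (L : List (ℕ × ℕ)) (u : Equiv.Perm (Fin n)) :
    invCount (u * (L.map (fun b => adjSwap (f b))).prod) ≤ invCount u + L.length := by
  induction L generalizing u with
  | nil => simp
  | cons b L ih =>
    have h1 := ih (u * adjSwap (f b))
    have h2 := invCount_mul_adjSwap_le u (f b)
    simp only [List.map_cons, List.prod_cons, List.length_cons, ← mul_assoc]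
    omega

lemma invCount_one : invCount (1 : Equiv.Perm (Fin n)) = 0 := by
  unfold invCount
  rw [Finset.card_eq_zero, Finset.filter_eq_empty_iff]
  rintro p - ⟨h, h'⟩
  exact lt_asymm h h'

/-! ### Demazure products -/

lemma invCount_demStep_le (v u : Equiv.Perm (Fin n)) (b : ℕ × ℕ) :
    invCount (demStep v u b) ≤ invCount u + 1 := by
  unfold demStep
  split_ifs
  · exact invCount_mul_adjSwap_le _ _
  · omega

lemma invCount_foldl_le (v : Equiv.Perm (Fin n)) (L : List (ℕ × ℕ)) (u : Equiv.Perm (Fin n)) :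
    invCount (L.foldl (demStep v) u) ≤ invCount u + L.length := by
  induction L generalizing u with
  | nil => simp
  | cons b L ih =>
    have h1 := ih (demStep v u b)
    have h2 := invCount_demStep_le v u b
    simp only [List.foldl_cons, List.length_cons]
    omega

/-- If the Demazure product has the largest length the word allows, then no step was idle and it
is the ordinary product of the word. -/
lemma foldl_eq_prod (v : Equiv.Perm (Fin n)) (L : List (ℕ × ℕ)) (u : Equiv.Perm (Fin n))
    (h : invCount (L.foldl (demStep v) u) = invCount u + L.length) :
    L.foldl (demStep v) u = u * (L.map (fun b => adjSwap (canonLabel v b))).prod := by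
  induction L generalizing u with
  | nil => simp
  | cons b L ih =>
    have h1 := invCount_foldl_le v L (demStep v u b)
    have h2 := invCount_demStep_le v u b
    simp only [List.foldl_cons, List.length_cons] at h
    have h3 : demStep v u b = u * adjSwap (canonLabel v b) := by
      unfold demStep at h h1 ⊢
      split_ifs at h h1 ⊢ with hc
      · rfl
      · omega
    rw [List.foldl_cons, ih _ (by omega), h3, List.map_cons, List.prod_cons, mul_assoc]

lemma mem_readingList (P : Finset (ℕ × ℕ)) (b : ℕ × ℕ) :
    b ∈ readingList n P ↔ b ∈ P ∧ b.1 < n ∧ b.2 < n := by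
  obtain ⟨r, c⟩ := b
  simp only [readingList, List.mem_flatMap, List.mem_reverse, List.mem_range, List.mem_map,
    List.mem_filter, decide_eq_true_eq, Prod.mk.injEq]
  constructor
  · rintro ⟨r', hr, c', ⟨hc, hP⟩, rfl, rfl⟩
    exact ⟨hP, hr, hc⟩
  · rintro ⟨hP, hr, hc⟩
    exact ⟨r, hr, c, ⟨hc, hP⟩, rfl, rfl⟩

lemma readingList_pairwise (P : Finset (ℕ × ℕ)) :
    (readingList n P).Pairwise (fun a b => b.1 < a.1 ∨ (b.1 = a.1 ∧ a.2 < b.2)) := by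
  rw [readingList, List.pairwise_flatMap]
  constructor
  · intro r _
    rw [List.pairwise_map]
    exact (List.pairwise_lt_range.filter _).imp (fun h => Or.inr ⟨rfl, h⟩)
  · rw [List.pairwise_reverse]
    refine List.pairwise_lt_range.imp ?_
    intro r r' h x hx y hy
    simp only [List.mem_map] at hx hy
    obtain ⟨_, _, rfl⟩ := hx
    obtain ⟨_, _, rfl⟩ := hy
    exact Or.inl h

lemma length_readingList (P : Finset (ℕ × ℕ)) (hP : ∀ b ∈ P, b.1 < n ∧ b.2 < n) :
    (readingList n P).length = P.card := by
  have hnd : (readingList n P).Nodup := by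
    refine (readingList_pairwise P).imp ?_
    rintro a b h rfl
    omega
  rw [← List.toFinset_card_of_nodup hnd]
  congr 1
  ext b
  rw [List.mem_toFinset, mem_readingList]
  exact ⟨fun h => h.1, fun h => ⟨h, hP b h⟩⟩

lemma adjSwap_mul_self (l : ℕ) : (adjSwap l : Equiv.Perm (Fin n)) * adjSwap l = 1 := by
  unfold adjSwap
  split_ifs
  · exact Equiv.swap_mul_self _ _
  · simp

lemma adjSwap_commute {l m : ℕ} (h : l + 1 < m) :
    Commute (adjSwap l : Equiv.Perm (Fin n)) (adjSwap m) := by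
  unfold adjSwap
  split_ifs with h1 h2
  · refine (Equiv.Perm.disjoint_swap_swap ?_).commute
    simp [Fin.ext_iff]
    omega
  · exact Commute.one_right _
  · exact Commute.one_left _
  · exact Commute.one_left _

/-! ### Boxes of the Rothe diagram and their labels -/

/-- Boxes of `D(v)` are the non-inversions of `v`: `c < p` with `v c < v p` corresponds to the box
in column `c` and in the row of the value `v p`. -/
lemma mem_Rothe_iff (v : Equiv.Perm (Fin n)) (r c : ℕ) :
    (r, c) ∈ Rothe v ↔
      ∃ j p : Fin n, (j : ℕ) = c ∧ r + v p + 1 = n ∧ j < p ∧ v j < v p := by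
  simp only [Rothe, Finset.mem_filter, Finset.mem_product, Finset.mem_range]
  constructor
  · rintro ⟨⟨hr, hc⟩, h1, h2⟩
    have hr' : n - 1 - r < n := by omega
    simp only [permVal, hc, hr', dif_pos] at h1 h2
    refine ⟨⟨c, hc⟩, v.symm ⟨n - 1 - r, hr'⟩, rfl, ?_, h2, ?_⟩
    · simp only [Equiv.apply_symm_apply]; omega
    · simp only [Equiv.apply_symm_apply, Fin.lt_def]; omega
  · rintro ⟨j, p, rfl, hr, hjp, hv⟩
    have hr' : n - 1 - r < n := by omega
    have hp : (⟨n - 1 - r, hr'⟩ : Fin n) = v p := by ext; simp only; omega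
    have hps : permVal v.symm (n - 1 - r) = p := by
      rw [permVal, dif_pos hr', hp, Equiv.symm_apply_apply]
    have hpj : permVal v j = v j := by rw [permVal, dif_pos j.isLt]
    rw [hps, hpj]
    rw [Fin.lt_def] at hjp hv
    omega

lemma canonLabel_box (v : Equiv.Perm (Fin n)) (r : ℕ) (j p : Fin n) (hr : r + v p + 1 = n)
    (hjp : j < p) :
    canonLabel v (r, (j : ℕ)) =
      r + ((Finset.univ : Finset (Fin n)).filter (fun k => k ≤ j ∧ v k < v p)).card := by
  unfold canonLabel
  congr 1
  symm
  rw [← Finset.card_image_of_injective (f := fun k : Fin n => (r, (k : ℕ)))]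
  · congr 1
    ext ⟨r', c'⟩
    simp only [Finset.mem_image, Finset.mem_filter, Finset.mem_univ, true_and, Prod.mk.injEq]
    constructor
    · rintro ⟨k, ⟨hk, hv⟩, rfl, rfl⟩
      exact ⟨(mem_Rothe_iff v _ _).2 ⟨k, p, rfl, hr, hk.trans_lt hjp, hv⟩, rfl, hk⟩
    · rintro ⟨hm, rfl, hc⟩
      obtain ⟨k, q, rfl, hq, hkq, hv⟩ := (mem_Rothe_iff v _ _).1 hm
      have hpq : v q = v p := by ext; omega
      exact ⟨k, ⟨hc, hpq ▸ hv⟩, rfl, rfl⟩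
  · intro a b hab
    simpa [Fin.ext_iff] using hab

lemma card_val_lt (v : Equiv.Perm (Fin n)) (y : Fin n) :
    ((Finset.univ : Finset (Fin n)).filter (fun k => v k < y)).card = y := by
  rw [← Finset.card_map v.toEmbedding, ← Fin.card_Iio y]
  congr 1
  ext z
  simp only [Finset.mem_map, Finset.mem_filter, Finset.mem_univ, true_and,
    Equiv.coe_toEmbedding, Finset.mem_Iio]
  constructor
  · rintro ⟨k, hk, rfl⟩
    exact hk
  · intro h
    exact ⟨v.symm z, by simpa using h, by simp⟩

/-! ### The last ascent -/

lemma IsLastAscent.lt_of_lt {v : Equiv.Perm (Fin n)} {i : ℕ} (hi : IsLastAscent v i)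
    (a b : Fin n) (ha : i ≤ a) (hab : a < b) : v b < v a := by
  obtain ⟨-, -, -, h⟩ := hi
  have key : ∀ d : ℕ, ∀ hd : (a : ℕ) + d + 1 < n, v ⟨a + d + 1, hd⟩ < v a := by
    have step : ∀ d : ℕ, ∀ hd : (a : ℕ) + d + 1 < n,
        v ⟨a + d + 1, hd⟩ < v ⟨a + d, by omega⟩ := by
      intro d hd
      have h' := h (a + d + 1) (by omega) hd
      have hd' : (a : ℕ) + d < n := by omega
      simp only [permVal, hd, hd', dif_pos, Nat.add_sub_cancel, not_lt] at h'
      refine lt_of_le_of_ne h' ?_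
      intro he
      have := v.injective he
      simp only [Fin.mk.injEq] at this
      omega
    intro d
    induction d with
    | zero => intro hd; exact step 0 hd
    | succ d ih => intro hd; exact (step (d + 1) hd).trans (ih (by omega))
  rw [Fin.lt_def] at hab
  have := key (b - a - 1) (by omega)
  have hb : (⟨a + (b - a - 1) + 1, by omega⟩ : Fin n) = b := by ext; simp only; omega
  rwa [hb] at this

lemma IsLastAscent.le_val {v : Equiv.Perm (Fin n)} {i : ℕ} (hi : IsLastAscent v i)
    (m b : Fin n) (hm : (m : ℕ) = i) (hb : i ≤ b) : v b ≤ v m := by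
  rcases eq_or_lt_of_le (show m ≤ b by rw [Fin.le_def]; omega) with h | h
  · rw [h]
  · exact (hi.lt_of_lt m b hm.ge h).le

lemma label_zlast {v : Equiv.Perm (Fin n)} {i : ℕ} (hi : IsLastAscent v i) (a m : Fin n)
    (ha : (a : ℕ) + 1 = i) (hm : (m : ℕ) = i) :
    canonLabel v (n - v m - 1, (a : ℕ)) = i := by
  have hlt := (v m).isLt
  rw [canonLabel_box v _ a m (by omega) (by rw [Fin.lt_def]; omega)]
  have hcard := card_val_lt v (v m)
  have hsplit : ((Finset.univ : Finset (Fin n)).filter (fun k => v k < v m)) =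
      ((Finset.univ : Finset (Fin n)).filter (fun k => k ≤ a ∧ v k < v m)) ∪ Finset.Ioi m := by
    ext k
    simp only [Finset.mem_union, Finset.mem_filter, Finset.mem_univ, true_and, Finset.mem_Ioi]
    constructor
    · intro hk
      have hne : (k : ℕ) ≠ m := fun h => by
        rw [Fin.ext h] at hk; exact lt_irrefl _ hk
      rw [Fin.le_def, Fin.lt_def (a := m)]
      by_cases h : (k : ℕ) ≤ a
      · exact Or.inl ⟨h, hk⟩
      · right; omega
    · rintro (h | h)
      · exact h.2
      · exact hi.lt_of_lt m k hm.ge h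
  rw [hsplit, Finset.card_union_of_disjoint, Fin.card_Ioi] at hcard
  · omega
  · rw [Finset.disjoint_left]
    intro k hk hk'
    simp only [Finset.mem_filter, Finset.mem_univ, true_and, Finset.mem_Ioi, Fin.le_def,
      Fin.lt_def] at hk hk'
    omega

/-- Boxes strictly below the row of `z_last` have labels at most `i - 2`, so their simple
transpositions commute with `s_i`. -/
lemma label_lt_of_row_lt {v : Equiv.Perm (Fin n)} {i : ℕ} (hi : IsLastAscent v i) (a m : Fin n)
    (ha : (a : ℕ) + 1 = i) (hm : (m : ℕ) = i) (ham : v a < v m) (b : ℕ × ℕ) (hb : b ∈ Rothe v)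
    (hrow : b.1 < n - v m - 1) : canonLabel v b + 1 < i := by
  obtain ⟨r, c⟩ := b
  obtain ⟨j, p, rfl, hr, hjp, hv⟩ := (mem_Rothe_iff v _ _).1 hb
  rw [canonLabel_box v _ j p hr hjp]
  simp only at hrow
  have hmp : v m < v p := by rw [Fin.lt_def]; omega
  have hlarge : ∀ k : Fin n, a ≤ k → v k < v p := by
    intro k hk
    rcases eq_or_lt_of_le hk with h | h
    · rw [← h]; exact ham.trans hmp
    · exact (hi.le_val m k hm (by rw [Fin.lt_def] at h; omega)).trans_lt hmp
  have hpa : p < a := by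
    by_contra h
    exact lt_irrefl _ (hlarge p (not_lt.1 h))
  have hsub : ((Finset.univ : Finset (Fin n)).filter (fun k => k ≤ j ∧ v k < v p)) ∪
      Finset.Ici a ⊆ (Finset.univ : Finset (Fin n)).filter (fun k => v k < v p) := by
    intro k
    simp only [Finset.mem_union, Finset.mem_filter, Finset.mem_univ, true_and, Finset.mem_Ici]
    rintro (h | h)
    · exact h.2
    · exact hlarge k h
  have hle := Finset.card_le_card hsub
  rw [card_val_lt, Finset.card_union_of_disjoint, Fin.card_Ici] at hle
  · omega
  · rw [Finset.disjoint_left]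
    intro k hk hk'
    simp only [Finset.mem_filter, Finset.mem_univ, true_and, Finset.mem_Ici, Fin.le_def,
      Fin.lt_def] at hk hk' hjp hpa
    omega

/-! ### Properties of `z_last` -/

/-- Lemmas 6.5, 6.7 and Claim 6.6: properties of the box `z_last`
when `i` is the last ascent of `v`, and the fact that no reduced pipe dream for `w₀w`
uses `z_last` when `i` is a descent of `w`. -/
theorem zlast_properties (n : ℕ) (v : Equiv.Perm (Fin n)) (i : ℕ)
    (hv : v ≠ longest) (hi : IsLastAscent v i) :
    zlastBox v i ∈ Rothe v ∧
    (∀ r : ℕ, (r, i - 1) ∈ Rothe v → n - permVal v i - 1 ≤ r) ∧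
    (∀ b ∈ Rothe v, b.2 ≤ i - 1) ∧
    canonLabel v (zlastBox v i) = i ∧
    (∀ b ∈ Rothe v, b ≠ zlastBox v i →
      (b.2 < i - 1 ∨ (b.2 = i - 1 ∧ n - permVal v i - 1 < b.1))) ∧
    (∀ w : Equiv.Perm (Fin n), invCount (w * adjSwap i) < invCount w →
      ∀ P ∈ RedPipes v (longest * w), zlastBox v i ∉ P) := by
  have hi' := hi
  obtain ⟨h1, hin, hasc, -⟩ := hi'
  have hin' : i - 1 < n := by omega
  obtain ⟨a, ha⟩ : ∃ a : Fin n, (a : ℕ) = i - 1 := ⟨⟨i - 1, hin'⟩, rfl⟩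
  obtain ⟨m, hm⟩ : ∃ m : Fin n, (m : ℕ) = i := ⟨⟨i, hin⟩, rfl⟩
  have hpm : permVal v i = v m := by subst hm; simp [permVal]
  have hpa : permVal v (i - 1) = v a := by rw [← ha]; simp [permVal]
  have ham : v a < v m := by rw [Fin.lt_def]; omega
  have hlt := (v m).isLt
  have hz : zlastBox v i = (n - v m - 1, (a : ℕ)) := by rw [zlastBox, hpm, ha]
  have hlab : canonLabel v (zlastBox v i) = i := by
    rw [hz]; exact label_zlast hi a m (by omega) hm
  have hmem : zlastBox v i ∈ Rothe v := by
    rw [hz, mem_Rothe_iff]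
    exact ⟨a, m, rfl, by omega, by rw [Fin.lt_def]; omega, ham⟩
  have hlow : ∀ r : ℕ, (r, i - 1) ∈ Rothe v → n - permVal v i - 1 ≤ r := by
    intro r hr
    obtain ⟨j, p, hj, hr, hjp, hvjp⟩ := (mem_Rothe_iff v _ _).1 hr
    have := hi.le_val m p hm (by rw [Fin.lt_def] at hjp; omega)
    rw [Fin.le_def] at this
    omega
  have hcol : ∀ b ∈ Rothe v, b.2 ≤ i - 1 := by
    rintro ⟨r, c⟩ hb
    obtain ⟨j, p, rfl, hr, hjp, hvjp⟩ := (mem_Rothe_iff v _ _).1 hb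
    by_contra hc
    simp only at hc
    exact lt_asymm hvjp (hi.lt_of_lt j p (by omega) hjp)
  refine ⟨hmem, hlow, hcol, hlab, ?_, ?_⟩
  · rintro ⟨r, c⟩ hb hne
    rcases (hcol _ hb).lt_or_eq with h | h
    · exact Or.inl h
    · right
      simp only at h
      subst h
      refine ⟨rfl, lt_of_le_of_ne (hlow r hb) ?_⟩
      rintro rfl
      exact hne rfl
  · intro w hw P hP hzP
    simp only [RedPipes, Pipes, Finset.mem_filter, Finset.mem_powerset] at hP
    obtain ⟨⟨hsub, hdem⟩, hcard⟩ := hP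
    have hbd : ∀ b ∈ P, b.1 < n ∧ b.2 < n := by
      intro b hb
      have := hsub hb
      simp only [Rothe, Finset.mem_filter, Finset.mem_product, Finset.mem_range] at this
      exact this.1
    have hlen := length_readingList P hbd
    have hup : invCount (longest * w) < invCount (longest * w * adjSwap i) := by
      have e1 := invCount_longest_mul w
      have e2 := invCount_longest_mul (w * adjSwap i)
      rw [mul_assoc]
      omega
    have hprod := foldl_eq_prod v (readingList n P) 1 (by
      change invCount (demazure v P) = _
      rw [hdem, ← hcard, hlen, invCount_one, zero_add])
    change demazure v P = _ at hprod
    obtain ⟨L₁, L₂, hL⟩ := List.append_of_mem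
      ((mem_readingList (n := n) P _).2 ⟨hzP, hbd _ hzP⟩)
    have hpw := readingList_pairwise (n := n) P
    rw [hL, List.pairwise_append, List.pairwise_cons] at hpw
    have hcomm : Commute ((L₂.map (fun b => adjSwap (canonLabel v b))).prod)
        (adjSwap i : Equiv.Perm (Fin n)) := by
      refine Commute.list_prod_left _ _ ?_
      intro s hs
      obtain ⟨b, hb, rfl⟩ := List.mem_map.1 hs
      have hbR : b ∈ Rothe v := hsub ((mem_readingList (n := n) P b).1 (by rw [hL]; simp [hb])).1
      refine adjSwap_commute (label_lt_of_row_lt hi a m (by omega) hm ham b hbR ?_)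
      have hafter := hpw.2.1.1 b hb
      have hc := hcol b hbR
      simp only [hz] at hafter
      omega
    have hdel : longest * w * adjSwap i =
        1 * ((L₁ ++ L₂).map (fun b => adjSwap (canonLabel v b))).prod := by
      rw [← hdem, hprod, hL]
      simp only [List.map_append, List.map_cons, List.prod_append, List.prod_cons, hlab, one_mul]
      rw [mul_assoc, mul_assoc, hcomm.eq, ← mul_assoc (adjSwap i), adjSwap_mul_self, one_mul]
    have hle := invCount_mul_prod_le (canonLabel v) (L₁ ++ L₂) (1 : Equiv.Perm (Fin n))
    rw [← hdel, invCount_one] at hle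
    rw [hL] at hlen
    simp only [List.length_append, List.length_cons] at hlen hle
    omega

end
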